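/- Let (▷,σ) be a cocycle datum for a Hopf algebra H on an algebra B, and let P = B⊗H be the cocycle cross product algebra with product (b#h)(c#g) = b(h_{(1)}▷c)σ(h_{(2)},g_{(1)}) # h_{(3)}g_{(2)} and coaction ρ = id⊗Δ. Define Θ : B⊗B⊗H → P⊗P by Θ(b⊗b'⊗h) := (b # h_{(1)}) ⊗ (b' # S(h_{(2)})). Then: (i) Θ is injective and its image is exactly the coinvariant subspace (P⊗P)^{coH} = { x ∈ P⊗P : x^{(0)} ⊗ x'^{(0)} ⊗ x^{(1)}x'^{(1)} = x ⊗ 1_H }, where ρ⊗ρ followed by multiplying the two H-legs is applied to x; (ii) Θ is multiplicative: Θ(X·Y) = Θ(X)•Θ(Y), where X·Y is the cocycle Hopf algebroid product (b⊗b'⊗h)(c⊗c'⊗g) = b(h_{(1)}▷c)σ(h_{(2)},g_{(1)}) ⊗ c'(S(g_{(4)})▷b')σ(S(g_{(3)}),S(h_{(4)})) ⊗ h_{(3)}g_{(2)}, and • is the product (p⊗q)•(r⊗u) := pr ⊗ uq in P⊗P. -/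

import Mathlib

/-!
Write `P = B ⊗ H`, with elements `b#h`.

*Injectivity.* Counitality shows that `(b#u) ⊗ (b'#v) ↦ ε(v) b ⊗ b' ⊗ u` (`thetaRetract`) is a
left inverse of `Θ`, because `ε ∘ S = ε`.

*Image.* Since `Δ(S h) = S(h₍₂₎) ⊗ S(h₍₁₎)` (`comul_antipode`), the coaction sends `Θ(b ⊗ b' ⊗ h)` to
`(b#h₍₁₎) ⊗ (b'#S(h₍₄₎)) ⊗ h₍₂₎S(h₍₃₎)`, that is to `Θ(b ⊗ b' ⊗ h) ⊗ 1` (`IsTheta.coinvTest`).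
Conversely, apply `Θ ∘ thetaRetract` to the `P ⊗ P` part of the coaction of `(b#h) ⊗ (b'#g)` and
multiply the remaining `H`-leg into the last leg: the result is
`(b#h₍₁₎) ⊗ (b'#S(h₍₂₎)h₍₃₎g) = (b#h) ⊗ (b'#g)` (`IsTheta.mulLast_coinvTest`). If `x` is coinvariant
the same operation gives `Θ (thetaRetract x)`, so `x` lies in the image of `Θ`.

*Multiplicativity.* Because `S` reverses products and coproducts, both `Θ(X · Y)` and `Θ(X) • Θ(Y)`
are equal, for `X = b ⊗ b' ⊗ h` and `Y = c ⊗ c' ⊗ g`, to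
`(b(h₍₁₎▷c)σ(h₍₂₎,g₍₁₎) # h₍₃₎g₍₂₎) ⊗ (c'(S(g₍₅₎)▷b')σ(S(g₍₄₎),S(h₍₅₎)) # S(g₍₃₎)S(h₍₄₎))`.
The two sides nest the five legs differently, and coassociativity (`sweedler_left`,
`sweedler_right`) matches them (`theta_mult`).

Sweedler notation is handled through explicit finite representations `IsRep2`, `IsRep3`, `IsRep4`;
an identity between legs is an equation in a tensor power of `H`, to which a suitable linear map is
applied.
-/

open scoped TensorProduct
open Coalgebra

noncomputable section

section SweedlerDefs

variable (k : Type*) [Field k]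
variable (H : Type*) [Ring H] [Bialgebra k H]

/-- Left-nested triple comultiplication `h ↦ (h₍₁₎ ⊗ h₍₂₎) ⊗ h₍₃₎`. -/
def Δ3 : H →ₗ[k] (H ⊗[k] H) ⊗[k] H :=
  (LinearMap.rTensor H (Coalgebra.comul (R := k) (A := H))) ∘ₗ Coalgebra.comul

/-- Left-nested fourfold comultiplication. -/
def Δ4 : H →ₗ[k] ((H ⊗[k] H) ⊗[k] H) ⊗[k] H :=
  (LinearMap.rTensor H (Δ3 k H)) ∘ₗ Coalgebra.comul

/-- Left-nested fivefold comultiplication. -/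
def Δ5 : H →ₗ[k] (((H ⊗[k] H) ⊗[k] H) ⊗[k] H) ⊗[k] H :=
  (LinearMap.rTensor H (Δ4 k H)) ∘ₗ Coalgebra.comul

/-- Left-nested sixfold comultiplication. -/
def Δ6 : H →ₗ[k] ((((H ⊗[k] H) ⊗[k] H) ⊗[k] H) ⊗[k] H) ⊗[k] H :=
  (LinearMap.rTensor H (Δ5 k H)) ∘ₗ Coalgebra.comul

/-- `IsRep2 k H h h1 h2` says that `Δh = ∑ᵢ h1 i ⊗ h2 i`, i.e. the families `h1, h2`
realise the Sweedler legs `h₍₁₎ ⊗ h₍₂₎`. -/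
def IsRep2 {n : ℕ} (h : H) (h1 h2 : Fin n → H) : Prop :=
  Coalgebra.comul (R := k) h = ∑ i, h1 i ⊗ₜ[k] h2 i

/-- A representation of the Sweedler legs `h₍₁₎ ⊗ h₍₂₎ ⊗ h₍₃₎`. -/
def IsRep3 {n : ℕ} (h : H) (h1 h2 h3 : Fin n → H) : Prop :=
  Δ3 k H h = ∑ i, (h1 i ⊗ₜ[k] h2 i) ⊗ₜ[k] h3 i

/-- A representation of the Sweedler legs `h₍₁₎ ⊗ h₍₂₎ ⊗ h₍₃₎ ⊗ h₍₄₎`. -/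
def IsRep4 {n : ℕ} (h : H) (h1 h2 h3 h4 : Fin n → H) : Prop :=
  Δ4 k H h = ∑ i, ((h1 i ⊗ₜ[k] h2 i) ⊗ₜ[k] h3 i) ⊗ₜ[k] h4 i

/-- A representation of the Sweedler legs `h₍₁₎ ⊗ ⋯ ⊗ h₍₅₎`. -/
def IsRep5 {n : ℕ} (h : H) (h1 h2 h3 h4 h5 : Fin n → H) : Prop :=
  Δ5 k H h = ∑ i, (((h1 i ⊗ₜ[k] h2 i) ⊗ₜ[k] h3 i) ⊗ₜ[k] h4 i) ⊗ₜ[k] h5 i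

/-- A representation of the Sweedler legs `h₍₁₎ ⊗ ⋯ ⊗ h₍₆₎`. -/
def IsRep6 {n : ℕ} (h : H) (h1 h2 h3 h4 h5 h6 : Fin n → H) : Prop :=
  Δ6 k H h = ∑ i, ((((h1 i ⊗ₜ[k] h2 i) ⊗ₜ[k] h3 i) ⊗ₜ[k] h4 i) ⊗ₜ[k] h5 i) ⊗ₜ[k] h6 i

/-- A Drinfeld 2-cocycle `χ : H ⊗ H → k` with convolution inverse `χi`. -/
structure DrinfeldCocycle (χ χi : H →ₗ[k] H →ₗ[k] k) : Prop where
  conv_left : ∀ (h g : H) {n m : ℕ} (h1 h2 : Fin n → H) (g1 g2 : Fin m → H),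
    IsRep2 k H h h1 h2 → IsRep2 k H g g1 g2 →
    ∑ i, ∑ j, χ (h1 i) (g1 j) * χi (h2 i) (g2 j)
      = Coalgebra.counit (R := k) h * Coalgebra.counit (R := k) g
  conv_right : ∀ (h g : H) {n m : ℕ} (h1 h2 : Fin n → H) (g1 g2 : Fin m → H),
    IsRep2 k H h h1 h2 → IsRep2 k H g g1 g2 →
    ∑ i, ∑ j, χi (h1 i) (g1 j) * χ (h2 i) (g2 j)
      = Coalgebra.counit (R := k) h * Coalgebra.counit (R := k) g
  cocycle : ∀ (h g f : H) {n m p : ℕ} (h1 h2 : Fin n → H) (g1 g2 : Fin m → H)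
      (f1 f2 : Fin p → H),
    IsRep2 k H h h1 h2 → IsRep2 k H g g1 g2 → IsRep2 k H f f1 f2 →
    ∑ j, ∑ l, χ (g1 j) (f1 l) * χ h (g2 j * f2 l)
      = ∑ i, ∑ j, χ (h1 i) (g1 j) * χ (h2 i * g2 j) f
  one_cocy : ∀ h : H, χ 1 h = Coalgebra.counit (R := k) h
  cocy_one : ∀ h : H, χ h 1 = Coalgebra.counit (R := k) h

/-- The twisted product `h • g = χ(h₍₁₎,g₍₁₎) h₍₂₎g₍₂₎ χ⁻¹(h₍₃₎,g₍₃₎)` of the Drinfeld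
cotwist `H^χ`, given as a bilinear map `tmul`. -/
def IsTwistedMul (χ χi : H →ₗ[k] H →ₗ[k] k) (tmul : H →ₗ[k] H →ₗ[k] H) : Prop :=
  ∀ (h g : H) {n m : ℕ} (h1 h2 h3 : Fin n → H) (g1 g2 g3 : Fin m → H),
    IsRep3 k H h h1 h2 h3 → IsRep3 k H g g1 g2 g3 →
    tmul h g = ∑ i, ∑ j, (χ (h1 i) (g1 j) * χi (h3 i) (g3 j)) • (h2 i * g2 j)

/-- A coquasitriangular structure `r` on `H`, with convolution inverse `ri`. -/
structure Coquasitriangular (r ri : H →ₗ[k] H →ₗ[k] k) : Prop where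
  conv_left : ∀ (h g : H) {n m : ℕ} (h1 h2 : Fin n → H) (g1 g2 : Fin m → H),
    IsRep2 k H h h1 h2 → IsRep2 k H g g1 g2 →
    ∑ i, ∑ j, r (h1 i) (g1 j) * ri (h2 i) (g2 j)
      = Coalgebra.counit (R := k) h * Coalgebra.counit (R := k) g
  conv_right : ∀ (h g : H) {n m : ℕ} (h1 h2 : Fin n → H) (g1 g2 : Fin m → H),
    IsRep2 k H h h1 h2 → IsRep2 k H g g1 g2 →
    ∑ i, ∑ j, ri (h1 i) (g1 j) * r (h2 i) (g2 j)
      = Coalgebra.counit (R := k) h * Coalgebra.counit (R := k) g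
  braid : ∀ (h g : H) {n m : ℕ} (h1 h2 : Fin n → H) (g1 g2 : Fin m → H),
    IsRep2 k H h h1 h2 → IsRep2 k H g g1 g2 →
    ∑ i, ∑ j, r (h2 i) (g2 j) • (g1 j * h1 i) = ∑ i, ∑ j, r (h1 i) (g1 j) • (h2 i * g2 j)
  mul_right : ∀ (h g f : H) {n : ℕ} (h1 h2 : Fin n → H), IsRep2 k H h h1 h2 →
    r h (g * f) = ∑ i, r (h1 i) g * r (h2 i) f
  mul_left : ∀ (h g f : H) {n : ℕ} (f1 f2 : Fin n → H), IsRep2 k H f f1 f2 →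
    r (h * g) f = ∑ i, r h (f1 i) * r g (f2 i)

variable (B : Type*) [Ring B] [Algebra k B]

/-- `u, ui : H → B` are convolution inverses of each other. -/
def ConvInv (u ui : H →ₗ[k] B) : Prop :=
  ∀ (h : H) {n : ℕ} (h1 h2 : Fin n → H), IsRep2 k H h h1 h2 →
    ∑ i, u (h1 i) * ui (h2 i) = Coalgebra.counit (R := k) h • (1 : B)
    ∧ ∑ i, ui (h1 i) * u (h2 i) = Coalgebra.counit (R := k) h • (1 : B)

/-- A measuring of `H` on `B`:  `h ▷ (ab) = (h₍₁₎ ▷ a)(h₍₂₎ ▷ b)` and `h ▷ 1 = ε(h)1`. -/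
structure Measuring (act : H →ₗ[k] B →ₗ[k] B) : Prop where
  act_mul : ∀ (h : H) (a b : B) {n : ℕ} (h1 h2 : Fin n → H),
    IsRep2 k H h h1 h2 → act h (a * b) = ∑ i, act (h1 i) a * act (h2 i) b
  act_one : ∀ h : H, act h 1 = Coalgebra.counit (R := k) h • (1 : B)

/-- A cocycle datum `(▷, σ)` (with chosen convolution inverse `σi` of `σ`). -/
structure CocycleDatum (act : H →ₗ[k] B →ₗ[k] B) (σ σi : H →ₗ[k] H →ₗ[k] B) : Prop where
  toMeasuring : Measuring k H B act
  conv_left : ∀ (h g : H) {n m : ℕ} (h1 h2 : Fin n → H) (g1 g2 : Fin m → H),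
    IsRep2 k H h h1 h2 → IsRep2 k H g g1 g2 →
    ∑ i, ∑ j, σ (h1 i) (g1 j) * σi (h2 i) (g2 j)
      = (Coalgebra.counit (R := k) h * Coalgebra.counit (R := k) g) • (1 : B)
  conv_right : ∀ (h g : H) {n m : ℕ} (h1 h2 : Fin n → H) (g1 g2 : Fin m → H),
    IsRep2 k H h h1 h2 → IsRep2 k H g g1 g2 →
    ∑ i, ∑ j, σi (h1 i) (g1 j) * σ (h2 i) (g2 j)
      = (Coalgebra.counit (R := k) h * Coalgebra.counit (R := k) g) • (1 : B)
  one_act : ∀ b : B, act 1 b = b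
  act_act : ∀ (h g : H) (b : B) {n m : ℕ} (h1 h2 h3 : Fin n → H) (g1 g2 g3 : Fin m → H),
    IsRep3 k H h h1 h2 h3 → IsRep3 k H g g1 g2 g3 →
    act h (act g b) = ∑ i, ∑ j, σ (h1 i) (g1 j) * act (h2 i * g2 j) b * σi (h3 i) (g3 j)
  sigma_one : ∀ h : H, σ h 1 = Coalgebra.counit (R := k) h • (1 : B)
  one_sigma : ∀ h : H, σ 1 h = Coalgebra.counit (R := k) h • (1 : B)
  cocycle : ∀ (h g f : H) {n m p : ℕ} (h1 h2 : Fin n → H) (g1 g2 : Fin m → H)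
      (f1 f2 : Fin p → H),
    IsRep2 k H h h1 h2 → IsRep2 k H g g1 g2 → IsRep2 k H f f1 f2 →
    ∑ i, ∑ j, ∑ l, act (h1 i) (σ (g1 j) (f1 l)) * σ (h2 i) (g2 j * f2 l)
      = ∑ i, ∑ j, σ (h1 i) (g1 j) * σ (h2 i * g2 j) f

/-- The cocycle cross product multiplication on `P = B ⊗ H`:
`(b#h)(c#g) = b(h₍₁₎▷c)σ(h₍₂₎,g₍₁₎) # h₍₃₎g₍₂₎`, given as a bilinear map `mult`. -/
def IsCrossMul (act : H →ₗ[k] B →ₗ[k] B) (σ : H →ₗ[k] H →ₗ[k] B)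
    (mult : B ⊗[k] H →ₗ[k] B ⊗[k] H →ₗ[k] B ⊗[k] H) : Prop :=
  ∀ (b c : B) (h g : H) {n m : ℕ} (h1 h2 h3 : Fin n → H) (g1 g2 : Fin m → H),
    IsRep3 k H h h1 h2 h3 → IsRep2 k H g g1 g2 →
    mult (b ⊗ₜ[k] h) (c ⊗ₜ[k] g)
      = ∑ i, ∑ j, (b * act (h1 i) c * σ (h2 i) (g1 j)) ⊗ₜ[k] (h3 i * g2 j)

end SweedlerDefs

section HopfDefs

variable (k : Type*) [Field k]
variable (H : Type*) [Ring H] [HopfAlgebra k H]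
variable (B : Type*) [Ring B] [Algebra k B]

/-- The cocycle Hopf algebroid multiplication on `B ⊗ B ⊗ H`:
`(b⊗b'⊗h)(c⊗c'⊗g) = b(h₍₁₎▷c)σ(h₍₂₎,g₍₁₎) ⊗ c'(S(g₍₄₎)▷b')σ(S(g₍₃₎),S(h₍₄₎)) ⊗ h₍₃₎g₍₂₎`,
given as a bilinear map `mult`. -/
def IsAlgebroidMul (act : H →ₗ[k] B →ₗ[k] B) (σ : H →ₗ[k] H →ₗ[k] B)
    (mult : B ⊗[k] (B ⊗[k] H) →ₗ[k] B ⊗[k] (B ⊗[k] H) →ₗ[k] B ⊗[k] (B ⊗[k] H)) : Prop :=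
  ∀ (b b' c c' : B) (h g : H) {n m : ℕ}
    (h1 h2 h3 h4 : Fin n → H) (g1 g2 g3 g4 : Fin m → H),
    IsRep4 k H h h1 h2 h3 h4 → IsRep4 k H g g1 g2 g3 g4 →
    mult (b ⊗ₜ[k] (b' ⊗ₜ[k] h)) (c ⊗ₜ[k] (c' ⊗ₜ[k] g))
      = ∑ i, ∑ j, (b * act (h1 i) c * σ (h2 i) (g1 j)) ⊗ₜ[k]
          ((c' * act (HopfAlgebra.antipode (R := k) (g4 j)) b'
              * σ (HopfAlgebra.antipode (R := k) (g3 j))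
                  (HopfAlgebra.antipode (R := k) (h4 i))) ⊗ₜ[k] (h3 i * g2 j))

end HopfDefs

section Statements

variable (k : Type*) [Field k]
variable (H : Type*) [Ring H] [HopfAlgebra k H]
variable (B : Type*) [Ring B] [Algebra k B]

/-- The right `H`-coaction `id ⊗ Δ` on `P = B ⊗ H`, viewed as a map `P → P ⊗ H`. -/
def crossCoact : B ⊗[k] H →ₗ[k] (B ⊗[k] H) ⊗[k] H :=
  (TensorProduct.assoc k B H H).symm.toLinearMap ∘ₗ
    (LinearMap.lTensor B (Coalgebra.comul (R := k) (A := H)))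

/-- The map `P ⊗ P → (P ⊗ P) ⊗ H` applying the coaction to both factors and multiplying
the two `H`-legs; its fixed points (against `x ⊗ 1`) are the coinvariants `(P ⊗ P)^{coH}`. -/
def coinvTest : (B ⊗[k] H) ⊗[k] (B ⊗[k] H) →ₗ[k] ((B ⊗[k] H) ⊗[k] (B ⊗[k] H)) ⊗[k] H :=
  (LinearMap.lTensor ((B ⊗[k] H) ⊗[k] (B ⊗[k] H)) (LinearMap.mul' k H)) ∘ₗ
    (TensorProduct.tensorTensorTensorComm k (B ⊗[k] H) H (B ⊗[k] H) H).toLinearMap ∘ₗ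
      (TensorProduct.map (crossCoact k H B) (crossCoact k H B))

variable {k H B}

local notation "𝑺" => HopfAlgebra.antipode (R := k)

open TensorProduct WithConv

/-! ### Coassociativity for higher Sweedler legs -/

/-- Coassociativity in the form `φ(h₍₁₎) ⊗ Δ(h₍₂₎) = φ(h₍₁₎) ⊗ h₍₂₎ ⊗ h₍₃₎`, with the right-hand side
computed by iterating `Δ` on the left leg. -/
lemma comul_assoc_map {M : Type*} [AddCommGroup M] [Module k M] (φ : H →ₗ[k] M) (h : H) :
    TensorProduct.map φ (comul (R := k) (A := H)) (comul h)
      = TensorProduct.assoc k M H H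
          ((LinearMap.rTensor H (LinearMap.rTensor H φ ∘ₗ comul)) (comul (R := k) h)) := by
  have h1 : TensorProduct.map φ (comul (R := k) (A := H)) (comul h)
      = LinearMap.rTensor (H ⊗[k] H) φ
          (LinearMap.lTensor H (comul (R := k) (A := H)) (comul (R := k) h)) := by
    rw [← LinearMap.comp_apply (LinearMap.rTensor _ _), LinearMap.rTensor_comp_lTensor]
  rw [h1, ← Coalgebra.coassoc_apply, LinearMap.rTensor_comp, LinearMap.comp_apply]
  generalize LinearMap.rTensor H (comul (R := k) (A := H)) (comul (R := k) h) = t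
  induction t with
  | zero => simp
  | add x y hx hy => simp only [map_add, hx, hy]
  | tmul x y =>
    induction x with
    | zero => simp
    | add x y hx hy => simp only [TensorProduct.add_tmul, map_add, hx, hy]
    | tmul x z => simp

variable (k H) in
/-- The map `m ⊗ h ↦ (m ⊗ h₍₁₎) ⊗ h₍₂₎`. Applied to the left factor of a left-nested iterated
coproduct, it splits the last leg of that factor, which is an inner leg of the whole. -/
def splitMid (M : Type*) [AddCommGroup M] [Module k M] : M ⊗[k] H →ₗ[k] (M ⊗[k] H) ⊗[k] H :=
  (TensorProduct.assoc k M H H).symm.toLinearMap ∘ₗ LinearMap.lTensor M comul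

lemma splitMid_tmul {M : Type*} [AddCommGroup M] [Module k M] (m : M) {n : ℕ} {h : H}
    {a b : Fin n → H} (hr : IsRep2 k H h a b) :
    splitMid k H M (m ⊗ₜ h) = ∑ i, (m ⊗ₜ[k] a i) ⊗ₜ[k] b i := by
  unfold IsRep2 at hr
  simp [splitMid, hr, TensorProduct.tmul_sum, map_sum]

/-- Splitting the second leg of `φ(h₍₁₎) ⊗ h₍₂₎` is the same as splitting the first leg before
applying `φ`; with `φ` the identity or `Δ` this produces the left-nested `Δ3` and `Δ4`. -/
lemma splitMid_rTensor {M : Type*} [AddCommGroup M] [Module k M] (φ : H →ₗ[k] M) (h : H) :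
    splitMid k H M (LinearMap.rTensor H φ (comul (R := k) h))
      = LinearMap.rTensor H (LinearMap.rTensor H φ ∘ₗ comul) (comul (R := k) h) := by
  have := comul_assoc_map φ h
  rw [← LinearEquiv.symm_apply_eq] at this
  rw [← this, splitMid, LinearMap.comp_apply, ← LinearMap.comp_apply (LinearMap.lTensor _ _),
    LinearMap.lTensor_comp_rTensor]
  rfl

lemma splitMid_comul (h : H) : splitMid k H H (comul (R := k) h) = Δ3 k H h := by
  simpa [Δ3] using splitMid_rTensor (k := k) LinearMap.id h

lemma splitMid_Δ3 (h : H) : splitMid k H (H ⊗[k] H) (Δ3 k H h) = Δ4 k H h := by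
  simpa only [Δ3, Δ4, LinearMap.comp_apply] using splitMid_rTensor (k := k) comul h

/-- `Δ(h₍₁₎) ⊗ Δ(h₍₂₎)` is obtained from `h₍₁₎ ⊗ h₍₂₎ ⊗ h₍₃₎` by splitting the middle leg. -/
lemma comul_comul (h : H) :
    TensorProduct.map (comul (R := k) (A := H)) (comul (R := k) (A := H)) (comul (R := k) h)
      = TensorProduct.assoc k (H ⊗[k] H) H H
          (LinearMap.rTensor H (splitMid k H H) (Δ3 k H h)) := by
  rw [comul_assoc_map]
  congr 1
  simp only [Δ3, LinearMap.comp_apply]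
  rw [← LinearMap.rTensor_comp_apply]
  congr 2
  ext x
  exact (splitMid_comul x).symm

/-- `Δ3(h₍₁₎) ⊗ Δ(h₍₂₎)` is obtained from the four legs of `h` by splitting the third one. -/
lemma Δ3_comul (h : H) :
    TensorProduct.map (Δ3 k H) (comul (R := k) (A := H)) (comul (R := k) h)
      = TensorProduct.assoc k _ H H
          (LinearMap.rTensor H (splitMid k H (H ⊗[k] H)) (Δ4 k H h)) := by
  rw [comul_assoc_map]
  congr 1
  simp only [Δ4, LinearMap.comp_apply]
  rw [← LinearMap.rTensor_comp_apply]
  congr 2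
  ext x
  exact (splitMid_Δ3 x).symm

/-- `Δ(h₍₁₎) ⊗ Δ3(h₍₂₎)` is obtained from the four legs of `h` by splitting the second one. -/
lemma comul_Δ3 (h : H) :
    TensorProduct.map (comul (R := k) (A := H)) (Δ3 k H) (comul (R := k) h)
      = TensorProduct.assoc k (H ⊗[k] H) (H ⊗[k] H) H
          (LinearMap.rTensor H (TensorProduct.assoc k (H ⊗[k] H) H H).toLinearMap
            (LinearMap.rTensor H (LinearMap.rTensor H (splitMid k H H)) (Δ4 k H h))) := by
  have e2 : (TensorProduct.assoc k (H ⊗[k] H) H H).toLinearMap ∘ₗ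
      LinearMap.rTensor H (splitMid k H H) ∘ₗ Δ3 k H
      = TensorProduct.map comul comul ∘ₗ comul := by
    ext x; simp [comul_comul]
  simp only [Δ4, LinearMap.comp_apply]
  rw [← LinearMap.rTensor_comp_apply, ← LinearMap.rTensor_comp_apply,
    LinearMap.comp_assoc, e2]
  have h1 : TensorProduct.map (comul (R := k) (A := H)) (Δ3 k H) (comul (R := k) h)
      = LinearMap.lTensor (H ⊗[k] H) (LinearMap.rTensor H comul)
        (TensorProduct.map (comul (R := k) (A := H)) comul (comul (R := k) h)) := by
    rw [← LinearMap.comp_apply (LinearMap.lTensor _ _), LinearMap.lTensor_comp_map]; rfl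
  rw [h1, comul_assoc_map]
  have h2 : LinearMap.rTensor H (TensorProduct.map comul comul ∘ₗ comul) (comul (R := k) h)
    = LinearMap.rTensor H (LinearMap.lTensor (H ⊗[k] H) (comul (R := k) (A := H)))
       (LinearMap.rTensor H (LinearMap.rTensor H comul ∘ₗ comul) (comul (R := k) h)) := by
    rw [← LinearMap.rTensor_comp_apply, ← LinearMap.comp_assoc,
      LinearMap.lTensor_comp_rTensor]
  rw [h2]
  generalize LinearMap.rTensor H (LinearMap.rTensor H comul ∘ₗ comul) (comul (R := k) h) = t
  induction t with
  | zero => simp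
  | add x y hx hy => simp only [map_add, hx, hy]
  | tmul x y =>
    induction x with
    | zero => simp
    | add x y hx hy => simp only [TensorProduct.add_tmul, map_add, hx, hy]
    | tmul x z => simp

/-! ### Existence of finite Sweedler representations -/

lemma exists_fin_sum {M N : Type*} [AddCommGroup M] [Module k M] [AddCommGroup N] [Module k N]
    (x : M ⊗[k] N) : ∃ (n : ℕ) (a : Fin n → M) (b : Fin n → N), x = ∑ i, a i ⊗ₜ[k] b i := by
  induction x with
  | zero => exact ⟨0, Fin.elim0, Fin.elim0, by simp⟩
  | tmul a b => exact ⟨1, fun _ => a, fun _ => b, by simp⟩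
  | add x y hx hy =>
    obtain ⟨n, a, b, rfl⟩ := hx
    obtain ⟨m, c, d, rfl⟩ := hy
    exact ⟨n + m, Fin.append a c, Fin.append b d, by simp [Fin.sum_univ_add]⟩

/-- A dependent double sum as a single sum over some `Fin N`, the index type that `IsRep3` and
`IsRep4` require. -/
lemma sum_sigma_fin {V : Type*} [AddCommMonoid V] {n : ℕ} {m : Fin n → ℕ}
    (f : (Σ i, Fin (m i)) → V) :
    ∑ i, ∑ j, f ⟨i, j⟩
      = ∑ l : Fin (Fintype.card (Σ i, Fin (m i))), f ((Fintype.equivFin _).symm l) := by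
  rw [Equiv.sum_comp (Fintype.equivFin _).symm f, Fintype.sum_sigma]

lemma exists_rep2 (h : H) : ∃ (n : ℕ) (a b : Fin n → H), IsRep2 k H h a b :=
  exists_fin_sum _

lemma exists_fin_sum3 (x : (H ⊗[k] H) ⊗[k] H) : ∃ (n : ℕ) (a b c : Fin n → H),
    x = ∑ i, (a i ⊗ₜ[k] b i) ⊗ₜ[k] c i := by
  obtain ⟨n, a, b, rfl⟩ := exists_fin_sum x
  choose m c d hcd using fun i => exists_fin_sum (a i)
  refine ⟨_, fun l => c _ ((Fintype.equivFin (Σ i, Fin (m i))).symm l).2,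
    fun l => d _ ((Fintype.equivFin (Σ i, Fin (m i))).symm l).2,
    fun l => b ((Fintype.equivFin (Σ i, Fin (m i))).symm l).1, ?_⟩
  rw [← sum_sigma_fin (fun l : Σ i, Fin (m i) => (c _ l.2 ⊗ₜ[k] d _ l.2) ⊗ₜ[k] b l.1)]
  exact Finset.sum_congr rfl fun i _ => by rw [hcd i, TensorProduct.sum_tmul]

lemma exists_rep3 (h : H) : ∃ (n : ℕ) (a b c : Fin n → H), IsRep3 k H h a b c :=
  exists_fin_sum3 _

lemma exists_rep4 (h : H) : ∃ (n : ℕ) (a b c d : Fin n → H), IsRep4 k H h a b c d := by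
  obtain ⟨n, a, b, hab⟩ := exists_fin_sum (Δ4 k H h)
  choose m c d e hcd using fun i => exists_fin_sum3 (a i)
  refine ⟨_, fun l => c _ ((Fintype.equivFin (Σ i, Fin (m i))).symm l).2,
    fun l => d _ ((Fintype.equivFin (Σ i, Fin (m i))).symm l).2,
    fun l => e _ ((Fintype.equivFin (Σ i, Fin (m i))).symm l).2,
    fun l => b ((Fintype.equivFin (Σ i, Fin (m i))).symm l).1, ?_⟩
  rw [IsRep4, ← sum_sigma_fin
    (fun l : Σ i, Fin (m i) => ((c _ l.2 ⊗ₜ[k] d _ l.2) ⊗ₜ[k] e _ l.2) ⊗ₜ[k] b l.1), hab]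
  exact Finset.sum_congr rfl fun i _ => by rw [hcd i, TensorProduct.sum_tmul]

/-! ### The antipode reverses Sweedler legs -/

/-- `Δ(S h) = S(h₍₂₎) ⊗ S(h₍₁₎)`. In the convolution algebra of linear maps `H → H ⊗ H`, the map
`Δ ∘ S` is a left inverse of `Δ` and `h ↦ S(h₍₂₎) ⊗ S(h₍₁₎)` is a right inverse, so they agree. -/
lemma comul_antipode (h : H) :
    comul (R := k) (𝑺 h) = TensorProduct.comm k H H
      (TensorProduct.map (HopfAlgebra.antipode k) (HopfAlgebra.antipode k) (comul (R := k) h)) := by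
  have key : (comul (R := k) (A := H)) ∘ₗ HopfAlgebra.antipode k
      = (TensorProduct.comm k H H).toLinearMap ∘ₗ
        TensorProduct.map (HopfAlgebra.antipode k) (HopfAlgebra.antipode k) ∘ₗ comul := by
    apply WithConv.toConv_injective
    apply left_inv_eq_right_inv (a := toConv (comul (R := k) (A := H)))
    · have := LinearMap.algHom_comp_convMul_distrib (Bialgebra.comulAlgHom k H)
        (toConv (HopfAlgebra.antipode k (A := H))) (toConv LinearMap.id)
      rw [LinearMap.antipode_mul_id] at this
      refine Eq.trans (congrArg toConv this.symm) ?_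
      ext x
      simp
    · ext x
      -- the convolution product sends `x` to `x₍₁₎ S(x₍₄₎) ⊗ x₍₂₎ S(x₍₃₎)`
      let G : (H ⊗[k] H) ⊗[k] (H ⊗[k] H) →ₗ[k] H ⊗[k] H :=
        LinearMap.mul' k (H ⊗[k] H) ∘ₗ LinearMap.lTensor _
          ((TensorProduct.comm k H H).toLinearMap ∘ₗ
            TensorProduct.map (HopfAlgebra.antipode k) (HopfAlgebra.antipode k))
      have hG : (toConv (comul (R := k) (A := H)) * toConv ((TensorProduct.comm k H H).toLinearMap ∘ₗ
        TensorProduct.map (HopfAlgebra.antipode k) (HopfAlgebra.antipode k) ∘ₗ comul)) x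
          = G (TensorProduct.map (comul (R := k)) (comul (R := k)) (comul (R := k) x)) := by
        rw [LinearMap.convMul_apply]
        simp only [G, LinearMap.comp_apply]
        rw [← LinearMap.comp_apply (LinearMap.lTensor _ _), LinearMap.lTensor_comp_map]
        rfl
      rw [hG, comul_comul]
      obtain ⟨n, a, b, hab⟩ := exists_rep2 (k := k) x
      choose m c d hcd using fun i => exists_rep2 (k := k) (a i)
      choose l e f hef using fun i (j : Fin (m i)) => exists_rep2 (k := k) (d i j)
      have hab' := hab
      unfold IsRep2 at hab hcd
      have e1 : ∀ i j, ∑ s, e i j s * 𝑺 (f i j s) = counit (R := k) (d i j) • (1 : H) := by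
        intro i j
        have := HopfAlgebra.mul_antipode_lTensor_comul_apply (R := k) (d i j)
        rw [show comul (R := k) (d i j) = _ from hef i j] at this
        simpa [map_sum, Algebra.smul_def] using this
      have e2 : ∀ i, ∑ j, counit (R := k) (d i j) • c i j = a i := by
        intro i
        have := Coalgebra.lTensor_counit_comul (R := k) (a i)
        rw [hcd i] at this
        simpa [map_sum] using congrArg (TensorProduct.rid k H) this
      have e3 : ∑ i, a i * 𝑺 (b i) = counit (R := k) x • (1 : H) := by
        have := HopfAlgebra.mul_antipode_lTensor_comul_apply (R := k) x
        rw [hab] at this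
        simpa [map_sum, Algebra.smul_def] using this
      simp only [Δ3, LinearMap.comp_apply, hab, map_sum, LinearMap.rTensor_tmul, hcd,
        TensorProduct.sum_tmul, splitMid_tmul _ (hef _ _), TensorProduct.assoc_tmul, G,
        LinearMap.lTensor_tmul, LinearEquiv.coe_coe, TensorProduct.map_tmul,
        TensorProduct.comm_tmul, LinearMap.mul'_apply, Algebra.TensorProduct.tmul_mul_tmul]
      simp only [← TensorProduct.tmul_sum, e1, TensorProduct.tmul_smul, TensorProduct.smul_tmul',
        ← smul_mul_assoc]
      simp only [← TensorProduct.sum_tmul, ← Finset.sum_mul, e2, e3, LinearMap.convOne_apply]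
      simp [Algebra.TensorProduct.algebraMap_apply, Algebra.smul_def]
  simpa using LinearMap.congr_fun key h

lemma IsRep2.antipode {h : H} {n : ℕ} {a b : Fin n → H} (hr : IsRep2 k H h a b) :
    IsRep2 k H (𝑺 h) (fun i => 𝑺 (b i)) (fun i => 𝑺 (a i)) := by
  unfold IsRep2 at *
  rw [comul_antipode, hr]
  simp [map_sum]

variable (k H) in
/-- Reversal of three tensor legs, `(x ⊗ y) ⊗ z ↦ (z ⊗ y) ⊗ x`. -/
def rev3 : (H ⊗[k] H) ⊗[k] H →ₗ[k] (H ⊗[k] H) ⊗[k] H :=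
  (TensorProduct.assoc k H H H).symm.toLinearMap ∘ₗ
    LinearMap.lTensor H (TensorProduct.comm k H H).toLinearMap ∘ₗ
      (TensorProduct.comm k (H ⊗[k] H) H).toLinearMap

@[simp] lemma rev3_tmul (x y z : H) : rev3 k H ((x ⊗ₜ y) ⊗ₜ z) = (z ⊗ₜ[k] y) ⊗ₜ[k] x := by
  simp [rev3]

lemma IsRep3.antipode {h : H} {n : ℕ} {a b c : Fin n → H} (hr : IsRep3 k H h a b c) :
    IsRep3 k H (𝑺 h) (fun i => 𝑺 (c i)) (fun i => 𝑺 (b i)) (fun i => 𝑺 (a i)) := by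
  have key : Δ3 k H (𝑺 h) = rev3 k H (TensorProduct.map (TensorProduct.map
      (HopfAlgebra.antipode k) (HopfAlgebra.antipode k)) (HopfAlgebra.antipode k) (Δ3 k H h)) := by
    obtain ⟨m, p, q, hpq⟩ := exists_rep2 (k := k) h
    choose l u v huv using fun i => exists_rep2 (k := k) (q i)
    rw [← splitMid_comul h]
    have h1 := hpq.antipode
    have h2 := fun i => (huv i).antipode
    unfold IsRep2 at hpq h1 h2
    simp only [Δ3, LinearMap.comp_apply, h1, hpq, map_sum, LinearMap.rTensor_tmul, h2,
      splitMid_tmul _ (huv _), TensorProduct.sum_tmul, TensorProduct.map_tmul, rev3_tmul]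
  unfold IsRep3 at *
  rw [key, hr]
  simp [map_sum]

/-! ### Injectivity of `Θ` and the coinvariants -/

variable (k H B) in
/-- The map `(b#u) ⊗ (b'#v) ↦ ε(v) b ⊗ b' ⊗ u`: a retraction of `Θ` on all of `P ⊗ P`. -/
def thetaRetract : (B ⊗[k] H) ⊗[k] (B ⊗[k] H) →ₗ[k] B ⊗[k] (B ⊗[k] H) :=
  LinearMap.lTensor B (TensorProduct.comm k H B).toLinearMap ∘ₗ
    (TensorProduct.assoc k B H B).toLinearMap ∘ₗ
      LinearMap.lTensor (B ⊗[k] H)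
        ((TensorProduct.rid k B).toLinearMap ∘ₗ LinearMap.lTensor B counit)

lemma thetaRetract_tmul (b b' : B) (u v : H) :
    thetaRetract k H B ((b ⊗ₜ u) ⊗ₜ (b' ⊗ₜ v))
      = counit (R := k) v • (b ⊗ₜ[k] (b' ⊗ₜ[k] u)) := by
  simp [thetaRetract]

variable (k H B) in
/-- The map `((b#u) ⊗ (b'#v)) ⊗ t ↦ (b#u) ⊗ (b'#vt)`. -/
def mulLast : ((B ⊗[k] H) ⊗[k] (B ⊗[k] H)) ⊗[k] H →ₗ[k] (B ⊗[k] H) ⊗[k] (B ⊗[k] H) :=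
  LinearMap.lTensor (B ⊗[k] H)
      (LinearMap.lTensor B (LinearMap.mul' k H) ∘ₗ (TensorProduct.assoc k B H H).toLinearMap) ∘ₗ
    (TensorProduct.assoc k (B ⊗[k] H) (B ⊗[k] H) H).toLinearMap

lemma mulLast_tmul (p : B ⊗[k] H) (b' : B) (v t : H) :
    mulLast k H B ((p ⊗ₜ (b' ⊗ₜ v)) ⊗ₜ t) = p ⊗ₜ[k] (b' ⊗ₜ[k] (v * t)) := by
  simp [mulLast]

lemma mulLast_one (x : (B ⊗[k] H) ⊗[k] (B ⊗[k] H)) : mulLast k H B (x ⊗ₜ 1) = x := by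
  induction x with
  | zero => simp
  | add x y hx hy => rw [TensorProduct.add_tmul, map_add, hx, hy]
  | tmul p q =>
    induction q with
    | zero => simp
    | add x y hx hy => simp only [TensorProduct.tmul_add, TensorProduct.add_tmul, map_add, hx, hy]
    | tmul b v => rw [mulLast_tmul, mul_one]

lemma crossCoact_tmul (b : B) {h : H} {n : ℕ} {a c : Fin n → H} (hr : IsRep2 k H h a c) :
    crossCoact k H B (b ⊗ₜ h) = ∑ i, (b ⊗ₜ[k] a i) ⊗ₜ[k] c i := by
  unfold IsRep2 at hr
  simp [crossCoact, hr, TensorProduct.tmul_sum, map_sum]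

lemma coinvTest_tmul (b b' : B) {h g : H} {n m : ℕ} {a c : Fin n → H} {d e : Fin m → H}
    (hr : IsRep2 k H h a c) (hg : IsRep2 k H g d e) :
    coinvTest k H B ((b ⊗ₜ h) ⊗ₜ (b' ⊗ₜ g))
      = ∑ i, ∑ j, ((b ⊗ₜ[k] a i) ⊗ₜ[k] (b' ⊗ₜ[k] d j)) ⊗ₜ[k] (c i * e j) := by
  simp only [coinvTest, LinearMap.comp_apply, TensorProduct.map_tmul, crossCoact_tmul _ hr,
    crossCoact_tmul _ hg, TensorProduct.sum_tmul, TensorProduct.tmul_sum, map_sum]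
  rw [Finset.sum_comm]
  simp

lemma sum_counit_smul_right {h : H} {n : ℕ} {a b : Fin n → H} (hr : IsRep2 k H h a b) :
    ∑ i, counit (R := k) (b i) • a i = h := by
  have := Coalgebra.lTensor_counit_comul (R := k) h
  rw [show comul (R := k) h = _ from hr] at this
  simpa [map_sum] using congrArg (TensorProduct.rid k H) this

lemma sum_counit_smul_tmul (b : B) {h : H} {n : ℕ} {a c : Fin n → H} (hr : IsRep2 k H h a c) :
    ∑ i, (counit (R := k) (c i) • b) ⊗ₜ[k] a i = b ⊗ₜ[k] h := by
  simp only [TensorProduct.smul_tmul, ← TensorProduct.tmul_sum, sum_counit_smul_right hr]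

lemma sum_antipode_mul {h : H} {n : ℕ} {a b : Fin n → H} (hr : IsRep2 k H h a b) :
    ∑ i, 𝑺 (a i) * b i = counit (R := k) h • (1 : H) := by
  have := HopfAlgebra.mul_antipode_rTensor_comul_apply (R := k) h
  rw [show comul (R := k) h = _ from hr] at this
  simpa [map_sum, Algebra.smul_def] using this

lemma sum_mul_antipode {h : H} {n : ℕ} {a b : Fin n → H} (hr : IsRep2 k H h a b) :
    ∑ i, a i * 𝑺 (b i) = counit (R := k) h • (1 : H) := by
  have := HopfAlgebra.mul_antipode_lTensor_comul_apply (R := k) h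
  rw [show comul (R := k) h = _ from hr] at this
  simpa [map_sum, Algebra.smul_def] using this

/-- The formula `Θ(b ⊗ b' ⊗ h) = (b#h₍₁₎) ⊗ (b'#S(h₍₂₎))`, required for every representation of
`Δ h`. -/
def IsTheta (Θ : B ⊗[k] (B ⊗[k] H) →ₗ[k] (B ⊗[k] H) ⊗[k] (B ⊗[k] H)) : Prop :=
  ∀ (b b' : B) (h : H) {n : ℕ} (h1 h2 : Fin n → H), IsRep2 k H h h1 h2 →
      Θ (b ⊗ₜ[k] (b' ⊗ₜ[k] h))
        = ∑ i, (b ⊗ₜ[k] h1 i) ⊗ₜ[k] (b' ⊗ₜ[k] 𝑺 (h2 i))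

section
variable {Θ : B ⊗[k] (B ⊗[k] H) →ₗ[k] (B ⊗[k] H) ⊗[k] (B ⊗[k] H)}

lemma IsTheta.retract (hΘ : IsTheta Θ) (X : B ⊗[k] (B ⊗[k] H)) :
    thetaRetract k H B (Θ X) = X := by
  suffices thetaRetract k H B ∘ₗ Θ = LinearMap.id from LinearMap.congr_fun this X
  ext b b' h
  obtain ⟨n, a, c, hr⟩ := exists_rep2 (k := k) h
  simp [hΘ b b' h a c hr, map_sum, thetaRetract_tmul]
  simp only [← TensorProduct.tmul_smul, ← TensorProduct.tmul_sum, sum_counit_smul_right hr]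

/-- For `x = (b#h) ⊗ (b'#g)` the left-hand side is `(b#h₍₁₎) ⊗ (b'#S(h₍₂₎)h₍₃₎g) = x`. When `x` is
coinvariant, so that `coinvTest x = x ⊗ 1`, the left-hand side is also `Θ (thetaRetract x)`; hence
every coinvariant lies in the image of `Θ`. -/
lemma IsTheta.mulLast_coinvTest (hΘ : IsTheta Θ) (x : (B ⊗[k] H) ⊗[k] (B ⊗[k] H)) :
    mulLast k H B (LinearMap.rTensor H (Θ ∘ₗ thetaRetract k H B) (coinvTest k H B x)) = x := by
  suffices mulLast k H B ∘ₗ LinearMap.rTensor H (Θ ∘ₗ thetaRetract k H B) ∘ₗ coinvTest k H B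
      = LinearMap.id from LinearMap.congr_fun this x
  ext b h b' g
  obtain ⟨n, a, c, hr⟩ := exists_rep2 (k := k) h
  obtain ⟨m, d, e, hg⟩ := exists_rep2 (k := k) g
  choose l u v huv using fun i => exists_rep2 (k := k) (a i)
  choose l' u' v' huv' using fun i => exists_rep2 (k := k) (c i)
  have e2 : ∑ j, counit (R := k) (d j) • e j = g := by
    have := Coalgebra.rTensor_counit_comul (R := k) g
    rw [show comul (R := k) g = _ from hg] at this
    simpa [map_sum] using congrArg (TensorProduct.lid k H) this
  -- `F` transports `splitMid_comul` to the identity between the two nestings of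
  -- `(b#h₍₁₎) ⊗ (b'#S(h₍₂₎)h₍₃₎g)`; only the right nesting allows `S(h₍₂₎)h₍₃₎` to collapse.
  let F : (H ⊗[k] H) ⊗[k] H →ₗ[k] (B ⊗[k] H) ⊗[k] (B ⊗[k] H) :=
    TensorProduct.map (TensorProduct.mk k B H b) (TensorProduct.mk k B H b' ∘ₗ
      LinearMap.mulRight k g ∘ₗ LinearMap.mul' k H ∘ₗ
        LinearMap.rTensor H (HopfAlgebra.antipode k)) ∘ₗ
      (TensorProduct.assoc k H H H).toLinearMap
  have hF : ∀ x y z, F ((x ⊗ₜ y) ⊗ₜ z) = (b ⊗ₜ[k] x) ⊗ₜ[k] (b' ⊗ₜ[k] (𝑺 y * z * g)) := by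
    intro x y z; simp [F]
  have key : ∑ i, ∑ s, (b ⊗ₜ[k] u i s) ⊗ₜ[k] (b' ⊗ₜ[k] (𝑺 (v i s) * c i * g))
      = (b ⊗ₜ[k] h) ⊗ₜ[k] (b' ⊗ₜ[k] g) := by
    have h1 := congrArg F (splitMid_comul (k := k) h)
    unfold IsRep2 at huv
    have hr' := hr
    unfold IsRep2 at hr'
    simp only [Δ3, LinearMap.comp_apply, hr', map_sum, splitMid_tmul _ (huv' _),
      LinearMap.rTensor_tmul, huv, TensorProduct.sum_tmul, hF] at h1
    rw [← h1]
    simp only [← TensorProduct.tmul_sum, ← Finset.sum_mul, sum_antipode_mul (huv' _),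
      smul_mul_assoc, one_mul, TensorProduct.tmul_smul]
    simp only [TensorProduct.smul_tmul', ← TensorProduct.sum_tmul, sum_counit_smul_tmul b hr]
  simp [coinvTest_tmul b b' hr hg, map_sum, thetaRetract_tmul, hΘ _ _ _ _ _ (huv _)]
  simp [← TensorProduct.smul_tmul', TensorProduct.sum_tmul, map_sum, mulLast_tmul]
  rw [← key]
  refine Finset.sum_congr rfl fun i _ => ?_
  simp only [Finset.smul_sum]
  rw [Finset.sum_comm]
  refine Finset.sum_congr rfl fun s _ => ?_
  simp only [← TensorProduct.tmul_smul, ← TensorProduct.tmul_sum]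
  conv_rhs => rw [← e2]
  simp [Finset.mul_sum, mul_assoc]

/-- Every element of the image of `Θ` is coinvariant: the coaction sends `Θ(b ⊗ b' ⊗ h)` to
`(b#h₍₁₎) ⊗ (b'#S(h₍₄₎)) ⊗ h₍₂₎S(h₍₃₎)`, whose two middle legs cancel. -/
lemma IsTheta.coinvTest (hΘ : IsTheta Θ) (X : B ⊗[k] (B ⊗[k] H)) :
    coinvTest k H B (Θ X) = Θ X ⊗ₜ[k] (1 : H) := by
  suffices _root_.coinvTest k H B ∘ₗ Θ
      = (TensorProduct.mk k _ H).flip 1 ∘ₗ Θ from LinearMap.congr_fun this X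
  ext b b' h
  obtain ⟨n, a, c, hr⟩ := exists_rep2 (k := k) h
  choose l u v huv using fun i => exists_rep2 (k := k) (a i)
  choose l' u' v' huv' using fun i => exists_rep2 (k := k) (c i)
  choose m e f hef using fun i s => exists_rep2 (k := k) (v i s)
  let F : (H ⊗[k] H) ⊗[k] (H ⊗[k] H) →ₗ[k] ((B ⊗[k] H) ⊗[k] (B ⊗[k] H)) ⊗[k] H :=
    TensorProduct.map (TensorProduct.map (TensorProduct.mk k B H b)
        (TensorProduct.mk k B H b' ∘ₗ HopfAlgebra.antipode k))
      (LinearMap.mul' k H ∘ₗ LinearMap.lTensor H (HopfAlgebra.antipode k)) ∘ₗ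
      (TensorProduct.tensorTensorTensorComm k H H H H).toLinearMap ∘ₗ
        LinearMap.lTensor (H ⊗[k] H) (TensorProduct.comm k H H).toLinearMap
  have hF : ∀ x y z w, F ((x ⊗ₜ y) ⊗ₜ (z ⊗ₜ w))
      = ((b ⊗ₜ[k] x) ⊗ₜ[k] (b' ⊗ₜ[k] 𝑺 w)) ⊗ₜ[k] (y * 𝑺 z) := by
    intro x y z w; simp [F]
  have h1 := congrArg F (comul_comul (k := k) h)
  have hr' := hr
  have huv1 := huv
  have huv1' := huv'
  unfold IsRep2 at hr' huv1 huv1'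
  simp only [Δ3, LinearMap.comp_apply, hr', map_sum, splitMid_tmul _ (hef _ _),
      LinearMap.rTensor_tmul, huv1, huv1', TensorProduct.map_tmul,
      TensorProduct.sum_tmul, TensorProduct.tmul_sum, TensorProduct.assoc_tmul, hF] at h1
  simp [hΘ b b' h a c hr, map_sum, coinvTest_tmul b b' (huv _) (huv' _).antipode]
  calc _ = _ := Finset.sum_congr rfl fun i _ => Finset.sum_comm
    _ = _ := h1
    _ = _ := by
      simp only [← TensorProduct.tmul_sum, sum_mul_antipode (hef _ _), TensorProduct.tmul_smul]
      simp only [TensorProduct.smul_tmul', ← TensorProduct.sum_tmul,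
        sum_counit_smul_tmul b (huv _)]

end

/-! ### Multiplicativity of `Θ` -/

/-- Five legs of `h`, computed either by splitting `h₍₃₎` among four legs (as in `Θ` of a product) or
as `Δ3(h₍₁₎) ⊗ Δ(h₍₂₎)` (as in the product of values of `Θ`). -/
lemma sweedler_left {h : H} {n : ℕ} {a c : Fin n → H} (hr : IsRep2 k H h a c)
    {m : Fin n → ℕ} {p1 p2 p3 : ∀ i, Fin (m i) → H} (hp : ∀ i, IsRep3 k H (a i) (p1 i) (p2 i) (p3 i))
    {l : Fin n → ℕ} {q1 q2 : ∀ i, Fin (l i) → H} (hq : ∀ i, IsRep2 k H (c i) (q1 i) (q2 i))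
    {n' : ℕ} {h1 h2 h3 h4 : Fin n' → H} (h4r : IsRep4 k H h h1 h2 h3 h4)
    {m' : Fin n' → ℕ} {e1 e2 : ∀ i, Fin (m' i) → H} (he : ∀ i, IsRep2 k H (h3 i) (e1 i) (e2 i)) :
    ∑ i, ∑ s, ((h1 i ⊗ₜ[k] h2 i) ⊗ₜ[k] e1 i s) ⊗ₜ[k] (e2 i s ⊗ₜ[k] h4 i)
      = ∑ i, ∑ s, ∑ t, ((p1 i s ⊗ₜ[k] p2 i s) ⊗ₜ[k] p3 i s) ⊗ₜ[k] (q1 i t ⊗ₜ[k] q2 i t) := by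
  have := Δ3_comul (k := k) h
  unfold IsRep2 at hr hq
  unfold IsRep3 at hp
  unfold IsRep4 at h4r
  simp only [hr, h4r, map_sum, TensorProduct.map_tmul, hp, hq, LinearMap.rTensor_tmul,
    splitMid_tmul _ (he _), TensorProduct.sum_tmul,
    TensorProduct.assoc_tmul] at this
  simp only [TensorProduct.tmul_sum] at this
  exact this.symm

/-- Five legs of `h`, computed either by splitting `h₍₂₎` among four legs or as
`Δ(h₍₁₎) ⊗ Δ3(h₍₂₎)`; this is the pattern met by the right-hand argument of the products. -/
lemma sweedler_right {h : H} {n : ℕ} {a c : Fin n → H} (hr : IsRep2 k H h a c)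
    {m : Fin n → ℕ} {p1 p2 p3 : ∀ i, Fin (m i) → H} (hp : ∀ i, IsRep3 k H (c i) (p1 i) (p2 i) (p3 i))
    {l : Fin n → ℕ} {q1 q2 : ∀ i, Fin (l i) → H} (hq : ∀ i, IsRep2 k H (a i) (q1 i) (q2 i))
    {n' : ℕ} {h1 h2 h3 h4 : Fin n' → H} (h4r : IsRep4 k H h h1 h2 h3 h4)
    {m' : Fin n' → ℕ} {e1 e2 : ∀ i, Fin (m' i) → H} (he : ∀ i, IsRep2 k H (h2 i) (e1 i) (e2 i)) :
    ∑ i, ∑ s, (h1 i ⊗ₜ[k] e1 i s) ⊗ₜ[k] ((e2 i s ⊗ₜ[k] h3 i) ⊗ₜ[k] h4 i)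
      = ∑ i, ∑ t, ∑ s, (q1 i t ⊗ₜ[k] q2 i t) ⊗ₜ[k] ((p1 i s ⊗ₜ[k] p2 i s) ⊗ₜ[k] p3 i s) := by
  have := comul_Δ3 (k := k) h
  unfold IsRep2 at hr hq
  unfold IsRep3 at hp
  unfold IsRep4 at h4r
  simp only [hr, h4r, map_sum, TensorProduct.map_tmul, hp, hq, LinearMap.rTensor_tmul,
    splitMid_tmul _ (he _), TensorProduct.sum_tmul,
    TensorProduct.assoc_tmul, LinearEquiv.coe_coe] at this
  simp only [TensorProduct.tmul_sum] at this
  exact this.symm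

/-- The common summand of `Θ(X · Y)` and `Θ(X) • Θ(Y)` for `X = b ⊗ b' ⊗ h` and `Y = c ⊗ c' ⊗ g`,
as a function of five legs `xᵢ` of `h` and five legs `yᵢ` of `g`. -/
def thetaTerm (act : H →ₗ[k] B →ₗ[k] B) (σ : H →ₗ[k] H →ₗ[k] B) (b b' c c' : B)
    (x1 x2 x3 x4 x5 y1 y2 y3 y4 y5 : H) : (B ⊗[k] H) ⊗[k] (B ⊗[k] H) :=
  ((b * act x1 c * σ x2 y1) ⊗ₜ[k] (x3 * y2)) ⊗ₜ[k]
    ((c' * act (𝑺 y5) b' * σ (𝑺 y4) (𝑺 x5)) ⊗ₜ[k] (𝑺 y3 * 𝑺 x4))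

section
variable (act : H →ₗ[k] B →ₗ[k] B) (σ : H →ₗ[k] H →ₗ[k] B) (b b' c c' : B)

/-- `thetaTerm` is multilinear in the legs of the left argument, so identities between the legs of `h`
may be substituted into it. -/
lemma exists_thetaTerm_left (y1 y2 y3 y4 y5 : H) :
    ∃ F : ((H ⊗[k] H) ⊗[k] H) ⊗[k] (H ⊗[k] H) →ₗ[k] (B ⊗[k] H) ⊗[k] (B ⊗[k] H),
      ∀ x1 x2 x3 x4 x5, F (((x1 ⊗ₜ x2) ⊗ₜ x3) ⊗ₜ (x4 ⊗ₜ x5))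
        = thetaTerm act σ b b' c c' x1 x2 x3 x4 x5 y1 y2 y3 y4 y5 := by
  refine ⟨TensorProduct.map
    (TensorProduct.map (LinearMap.mul' k B ∘ₗ
      TensorProduct.map (LinearMap.mulLeft k b ∘ₗ act.flip c) (σ.flip y1))
      (LinearMap.mulRight k y2))
    (TensorProduct.map (LinearMap.mulLeft k (c' * act (𝑺 y5) b') ∘ₗ σ (𝑺 y4) ∘ₗ
      HopfAlgebra.antipode k) (LinearMap.mulLeft k (𝑺 y3) ∘ₗ HopfAlgebra.antipode k) ∘ₗ
      (TensorProduct.comm k H H).toLinearMap), ?_⟩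
  intros
  simp [thetaTerm, mul_assoc]

/-- `thetaTerm` is multilinear in the legs of the right argument, so identities between the legs of
`g` may be substituted into it. -/
lemma exists_thetaTerm_right (x1 x2 x3 x4 x5 : H) :
    ∃ F : (H ⊗[k] H) ⊗[k] ((H ⊗[k] H) ⊗[k] H) →ₗ[k] (B ⊗[k] H) ⊗[k] (B ⊗[k] H),
      ∀ y1 y2 y3 y4 y5, F ((y1 ⊗ₜ y2) ⊗ₜ ((y3 ⊗ₜ y4) ⊗ₜ y5))
        = thetaTerm act σ b b' c c' x1 x2 x3 x4 x5 y1 y2 y3 y4 y5 := by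
  refine ⟨TensorProduct.map
    (TensorProduct.map (LinearMap.mulLeft k (b * act x1 c) ∘ₗ σ x2) (LinearMap.mulLeft k x3))
    (TensorProduct.map (LinearMap.mul' k B ∘ₗ
      TensorProduct.map (LinearMap.mulLeft k c' ∘ₗ act.flip b' ∘ₗ HopfAlgebra.antipode k)
        (σ.flip (𝑺 x5) ∘ₗ HopfAlgebra.antipode k))
      (LinearMap.mulRight k (𝑺 x4) ∘ₗ HopfAlgebra.antipode k) ∘ₗ rev3 k H), ?_⟩
  intros
  simp [thetaTerm, mul_assoc]

end

lemma IsRep2.mul {h g : H} {n m : ℕ} {a b : Fin n → H} {c d : Fin m → H}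
    (hr : IsRep2 k H h a b) (hg : IsRep2 k H g c d) :
    comul (R := k) (h * g) = ∑ i, ∑ j, (a i * c j) ⊗ₜ[k] (b i * d j) := by
  unfold IsRep2 at hr hg
  rw [Bialgebra.comul_mul, hr, hg, Finset.sum_mul_sum]
  simp

/-- `Θ` on a product `hg` in the `H`-leg, from `Δ(hg) = Δ(h)Δ(g)` and `S(hg) = S(g)S(h)`. -/
lemma IsTheta.mul {Θ : B ⊗[k] (B ⊗[k] H) →ₗ[k] (B ⊗[k] H) ⊗[k] (B ⊗[k] H)} (hΘ : IsTheta Θ)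
    (b b' : B) {h g : H} {n m : ℕ} {a c : Fin n → H} {d e : Fin m → H}
    (hr : IsRep2 k H h a c) (hg : IsRep2 k H g d e) :
    Θ (b ⊗ₜ[k] (b' ⊗ₜ[k] (h * g)))
      = ∑ i, ∑ j, (b ⊗ₜ[k] (a i * d j)) ⊗ₜ[k] (b' ⊗ₜ[k] (𝑺 (e j) * 𝑺 (c i))) := by
  let F : H ⊗[k] H →ₗ[k] (B ⊗[k] H) ⊗[k] (B ⊗[k] H) :=
    TensorProduct.map (TensorProduct.mk k B H b)
      (TensorProduct.mk k B H b' ∘ₗ HopfAlgebra.antipode k)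
  obtain ⟨l, u, v, huv⟩ := exists_rep2 (k := k) (h * g)
  have h1 := congrArg F (show comul (R := k) (h * g) = _ from huv)
  rw [hr.mul hg] at h1
  rw [hΘ _ _ _ _ _ huv]
  simp only [F, map_sum, TensorProduct.map_tmul, TensorProduct.mk_apply, LinearMap.comp_apply,
    HopfAlgebra.antipode_mul_antidistrib] at h1
  exact h1.symm

lemma sum_pull {V ι : Type*} [AddCommMonoid V] [Fintype ι] {n : ℕ} {m : Fin n → ℕ}
    (f : ∀ j, Fin (m j) → ι → V) : ∑ j, ∑ t, ∑ i, f j t i = ∑ i, ∑ j, ∑ t, f j t i := by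
  rw [Finset.sum_comm]
  exact Finset.sum_congr rfl fun j _ => Finset.sum_comm

/-- Multiplicativity of `Θ` on pure tensors. Both sides are sums of `thetaTerm` over five legs of `h`
and five legs of `g`; they differ only in the way these legs are produced. -/
lemma theta_mult (act : H →ₗ[k] B →ₗ[k] B) (σ : H →ₗ[k] H →ₗ[k] B)
    (mult : B ⊗[k] H →ₗ[k] B ⊗[k] H →ₗ[k] B ⊗[k] H)
    (hmult : IsCrossMul k H B act σ mult)
    (multL : B ⊗[k] (B ⊗[k] H) →ₗ[k] B ⊗[k] (B ⊗[k] H) →ₗ[k] B ⊗[k] (B ⊗[k] H))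
    (hmultL : IsAlgebroidMul k H B act σ multL)
    (Θ : B ⊗[k] (B ⊗[k] H) →ₗ[k] (B ⊗[k] H) ⊗[k] (B ⊗[k] H)) (hΘ : IsTheta Θ)
    (bullet : (B ⊗[k] H) ⊗[k] (B ⊗[k] H) →ₗ[k]
      (B ⊗[k] H) ⊗[k] (B ⊗[k] H) →ₗ[k] (B ⊗[k] H) ⊗[k] (B ⊗[k] H))
    (hbullet : ∀ p q r u : B ⊗[k] H,
      bullet (p ⊗ₜ[k] q) (r ⊗ₜ[k] u) = (mult p r) ⊗ₜ[k] (mult u q))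
    (b b' c c' : B) (h g : H) :
    Θ (multL (b ⊗ₜ (b' ⊗ₜ h)) (c ⊗ₜ (c' ⊗ₜ g)))
      = bullet (Θ (b ⊗ₜ (b' ⊗ₜ h))) (Θ (c ⊗ₜ (c' ⊗ₜ g))) := by
  obtain ⟨n, a, a', ha⟩ := exists_rep2 (k := k) h
  obtain ⟨m, d, d', hd⟩ := exists_rep2 (k := k) g
  choose np p1 p2 p3 hp using fun i => exists_rep3 (k := k) (a i)
  choose nq q1 q2 hq using fun i => exists_rep2 (k := k) (a' i)
  choose nr r1 r2 hr using fun i => exists_rep2 (k := k) (d i)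
  choose ns s1 s2 s3 hs using fun i => exists_rep3 (k := k) (d' i)
  obtain ⟨n', h1, h2, h3, h4, hh⟩ := exists_rep4 (k := k) h
  obtain ⟨m', g1, g2, g3, g4, hg⟩ := exists_rep4 (k := k) g
  choose ne e1 e2 he using fun i => exists_rep2 (k := k) (h3 i)
  choose nw w1 w2 hw using fun i => exists_rep2 (k := k) (g2 i)
  have L : Θ (multL (b ⊗ₜ (b' ⊗ₜ h)) (c ⊗ₜ (c' ⊗ₜ g)))
      = ∑ i, ∑ j, ∑ s, ∑ t, thetaTerm act σ b b' c c' (h1 i) (h2 i) (e1 i s) (e2 i s) (h4 i)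
          (g1 j) (w1 j t) (w2 j t) (g3 j) (g4 j) := by
    simp only [hmultL b b' c c' h g _ _ _ _ _ _ _ _ hh hg, map_sum, hΘ.mul _ _ (he _) (hw _),
      thetaTerm]
  have R : bullet (Θ (b ⊗ₜ (b' ⊗ₜ h))) (Θ (c ⊗ₜ (c' ⊗ₜ g)))
      = ∑ i, ∑ s, ∑ t, ∑ j, ∑ u, ∑ v,
          thetaTerm act σ b b' c c' (p1 i s) (p2 i s) (p3 i s) (q1 i t) (q2 i t)
            (r1 j u) (r2 j u) (s1 j v) (s2 j v) (s3 j v) := by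
    simp only [hΘ _ _ _ _ _ ha, hΘ _ _ _ _ _ hd, map_sum, LinearMap.sum_apply, hbullet,
      hmult _ _ _ _ _ _ _ _ _ (hp _) (hr _),
      hmult _ _ _ _ _ _ _ _ _ (hs _).antipode (hq _).antipode]
    simp only [TensorProduct.sum_tmul]
    simp only [TensorProduct.tmul_sum]
    simp only [thetaTerm]
    rw [Finset.sum_comm]
    refine Finset.sum_congr rfl fun i _ => ?_
    rw [Finset.sum_comm]
    refine Finset.sum_congr rfl fun s _ => ?_
    conv_rhs => rw [Finset.sum_comm]
    refine Finset.sum_congr rfl fun j _ => ?_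
    exact sum_pull (m := fun _ => ns j) _
  have X : ∀ y1 y2 y3 y4 y5,
      ∑ i, ∑ s, thetaTerm act σ b b' c c' (h1 i) (h2 i) (e1 i s) (e2 i s) (h4 i) y1 y2 y3 y4 y5
      = ∑ i, ∑ s, ∑ t, thetaTerm act σ b b' c c' (p1 i s) (p2 i s) (p3 i s) (q1 i t) (q2 i t)
          y1 y2 y3 y4 y5 := by
    intro y1 y2 y3 y4 y5
    obtain ⟨F, hF⟩ := exists_thetaTerm_left act σ b b' c c' y1 y2 y3 y4 y5
    simpa only [map_sum, hF] using congrArg F (sweedler_left ha hp hq hh he)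
  have Y : ∀ x1 x2 x3 x4 x5,
      ∑ j, ∑ t, thetaTerm act σ b b' c c' x1 x2 x3 x4 x5 (g1 j) (w1 j t) (w2 j t) (g3 j) (g4 j)
      = ∑ j, ∑ u, ∑ v, thetaTerm act σ b b' c c' x1 x2 x3 x4 x5
          (r1 j u) (r2 j u) (s1 j v) (s2 j v) (s3 j v) := by
    intro x1 x2 x3 x4 x5
    obtain ⟨F, hF⟩ := exists_thetaTerm_right act σ b b' c c' x1 x2 x3 x4 x5
    simpa only [map_sum, hF] using congrArg F (sweedler_right hd hs hr hg hw)
  rw [L, R]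
  calc _ = ∑ j, ∑ t, ∑ i, ∑ s, thetaTerm act σ b b' c c' (h1 i) (h2 i) (e1 i s) (e2 i s) (h4 i)
          (g1 j) (w1 j t) (w2 j t) (g3 j) (g4 j) := by
        rw [Finset.sum_comm]
        refine Finset.sum_congr rfl fun j _ => ?_
        rw [Finset.sum_comm]
        exact Finset.sum_congr rfl fun i _ => Finset.sum_comm
    _ = ∑ j, ∑ t, ∑ i, ∑ s, ∑ u, thetaTerm act σ b b' c c' (p1 i s) (p2 i s) (p3 i s) (q1 i u)
          (q2 i u) (g1 j) (w1 j t) (w2 j t) (g3 j) (g4 j) := by simp only [X]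
    _ = ∑ i, ∑ s, ∑ u, ∑ j, ∑ t, thetaTerm act σ b b' c c' (p1 i s) (p2 i s) (p3 i s) (q1 i u)
          (q2 i u) (g1 j) (w1 j t) (w2 j t) (g3 j) (g4 j) := by
        rw [sum_pull]
        refine Finset.sum_congr rfl fun i _ => ?_
        rw [sum_pull]
        refine Finset.sum_congr rfl fun s _ => ?_
        rw [sum_pull]
    _ = _ := by simp only [Y]

/-- Lemma 4.3: `Θ(b⊗b'⊗h) = (b#h₍₁₎) ⊗ (b'#S(h₍₂₎))` identifies the cocycle Hopf algebroid
`B^e #_σ H` with the Ehresmann–Schauenburg bialgebroid `L(B#_σH, H)`, realised as the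
coinvariants of `P ⊗ P` with the product `(p⊗q)•(r⊗u) = pr ⊗ uq`. -/
theorem statement18 (act : H →ₗ[k] B →ₗ[k] B) (σ σi : H →ₗ[k] H →ₗ[k] B)
    (hcd : CocycleDatum k H B act σ σi)
    (mult : B ⊗[k] H →ₗ[k] B ⊗[k] H →ₗ[k] B ⊗[k] H)
    (hmult : IsCrossMul k H B act σ mult)
    (multL : B ⊗[k] (B ⊗[k] H) →ₗ[k] B ⊗[k] (B ⊗[k] H) →ₗ[k] B ⊗[k] (B ⊗[k] H))
    (hmultL : IsAlgebroidMul k H B act σ multL)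
    (Θ : B ⊗[k] (B ⊗[k] H) →ₗ[k] (B ⊗[k] H) ⊗[k] (B ⊗[k] H))
    (hΘ : ∀ (b b' : B) (h : H) {n : ℕ} (h1 h2 : Fin n → H), IsRep2 k H h h1 h2 →
      Θ (b ⊗ₜ[k] (b' ⊗ₜ[k] h))
        = ∑ i, (b ⊗ₜ[k] h1 i) ⊗ₜ[k] (b' ⊗ₜ[k] 𝑺 (h2 i)))
    (bullet : (B ⊗[k] H) ⊗[k] (B ⊗[k] H) →ₗ[k]
      (B ⊗[k] H) ⊗[k] (B ⊗[k] H) →ₗ[k] (B ⊗[k] H) ⊗[k] (B ⊗[k] H))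
    (hbullet : ∀ p q r u : B ⊗[k] H,
      bullet (p ⊗ₜ[k] q) (r ⊗ₜ[k] u) = (mult p r) ⊗ₜ[k] (mult u q)) :
    -- (i) Θ is injective with image the coinvariants (P ⊗ P)^{coH}
    (Function.Injective Θ
      ∧ Set.range Θ
          = {x : (B ⊗[k] H) ⊗[k] (B ⊗[k] H) |
              coinvTest k H B x = x ⊗ₜ[k] (1 : H)})
    ∧
    -- (ii) Θ is multiplicative
    (∀ X Y : B ⊗[k] (B ⊗[k] H), Θ (multL X Y) = bullet (Θ X) (Θ Y)) := by
  have hΘ' : IsTheta Θ := hΘ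
  refine ⟨⟨Function.LeftInverse.injective hΘ'.retract, Set.Subset.antisymm ?_ ?_⟩, fun X Y => ?_⟩
  · rintro _ ⟨X, rfl⟩
    exact hΘ'.coinvTest X
  · intro x hx
    refine ⟨thetaRetract k H B x, ?_⟩
    have h1 := hΘ'.mulLast_coinvTest x
    rw [show coinvTest k H B x = x ⊗ₜ[k] (1 : H) from hx, LinearMap.rTensor_tmul,
      mulLast_one] at h1
    exact h1
  · suffices multL.compr₂ Θ = bullet.compl₁₂ Θ Θ from LinearMap.congr_fun₂ this X Y
    ext b b' h c c' g
    exact theta_mult act σ mult hmult multL hmultL Θ hΘ' bullet hbullet b b' c c' h g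

end Statements
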